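/- Let S = (S, I, O, G, D, h) be a weakly-complete deterministic TFSM with output delays all of whose guards are half-open intervals [u,v) with integers 0 ≤ u < v, and assume that for every input i and every state s the union of the guards of the transitions labeled i from s equals the interval [U_i, V_i), where U_i and V_i are the minimal left and maximal right boundary over all guards appearing on transitions labeled i. Then the region FSM R(S) is a deterministic and complete FSM. -/

import Mathlib

/-!
A refined guard `[p, q)` of an input `i` is nonempty and contains no boundary point of `G_i` in
its interior, so its left endpoint `p` decides everything.

* Two transitions whose guards both include `[p, q)` share the point `p`, hence coincide by
  determinism of the TFSM; thus the region FSM is deterministic.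
* The point `p` lies in `[U_i, V_i)`, so at every state some transition on `i` has a guard
  `[u, v)` containing `p` (`hcover`). Since `v > p` is a boundary point, `v < q` is impossible,
  whence `[p, q) ⊆ [u, v)` (`guardSub_of_lo_mem`); thus the region FSM is complete.
-/

/-- A timed guard: an interval with natural-number endpoints, left-closed, and
either right-open (`rightClosed = false`, i.e. `[lo, hi)`) or right-closed
(`rightClosed = true`, i.e. `[lo, hi]`; point intervals are `[u,u]`). -/
structure Guard where
  lo : ℕ
  hi : ℕ
  rightClosed : Bool
deriving DecidableEq

/-- Membership of a timestamp in a guard. -/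
def GuardMem (g : Guard) (t : ℝ) : Prop :=
  (g.lo : ℝ) ≤ t ∧ (if g.rightClosed then t ≤ (g.hi : ℝ) else t < (g.hi : ℝ))

/-- Guard inclusion (as sets of timestamps). -/
def GuardSub (g g' : Guard) : Prop := ∀ t : ℝ, GuardMem g t → GuardMem g' t

/-- A transition of a TFSM with output delays: source state, input, timed guard,
output, positive integer output delay, destination state. -/
structure TTrans (S I O : Type) where
  src : S
  inp : I
  guard : Guard
  out : O
  delay : ℕ+
  dst : S

/-- A TFSM with output delays over states `S`, inputs `I`, outputs `O`,
given by its transition relation. -/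
abbrev TFSM (S I O : Type) := Set (TTrans S I O)

variable {S I O A B : Type}

/-- Determinism: any two distinct transitions from the same state on the same input
have disjoint guards. -/
def TFSMDeterministic (M : TFSM S I O) : Prop :=
  ∀ tr ∈ M, ∀ tr' ∈ M, tr.src = tr'.src → tr.inp = tr'.inp → tr ≠ tr' →
    ∀ t : ℝ, ¬ (GuardMem tr.guard t ∧ GuardMem tr'.guard t)

/-- A timed input sequence: nonnegative, nondecreasing timestamps. -/
def IsTimedInputSeq (α : List (I × ℝ)) : Prop :=
  (∀ p ∈ α, 0 ≤ p.2) ∧ List.Chain' (· ≤ ·) (α.map Prod.snd)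

/-- `TRunTo M s t0 α trs sf`: starting at state `s` at time `t0`, the timed input
sequence `α` induces the sequence of transitions `trs`, ending at state `sf`. -/
inductive TRunTo (M : TFSM S I O) : S → ℝ → List (I × ℝ) → List (TTrans S I O) → S → Prop
  | nil (s : S) (t0 : ℝ) : TRunTo M s t0 [] [] s
  | cons {s sf : S} {t0 t : ℝ} {i : I} {tr : TTrans S I O}
      {rest : List (I × ℝ)} {trs : List (TTrans S I O)} :
      tr ∈ M → tr.src = s → tr.inp = i → GuardMem tr.guard (t - t0) →
      TRunTo M tr.dst t rest trs sf →
      TRunTo M s t0 ((i, t) :: rest) (tr :: trs) sf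

/-- `α` induces the sequence of transitions `trs` from state `s`. -/
def TInduces (M : TFSM S I O) (s : S) (α : List (I × ℝ)) (trs : List (TTrans S I O)) : Prop :=
  ∃ sf : S, TRunTo M s 0 α trs sf

/-- `Dom(s)`: the timed input sequences inducing at least one sequence of transitions from `s`. -/
def TDom (M : TFSM S I O) (s : S) : Set (List (I × ℝ)) :=
  { α | IsTimedInputSeq α ∧ ∃ trs, TInduces M s α trs }

/-- `next_state(s, α) = sf` (as a relation, since `next_state` is partial). -/
def TReaches (M : TFSM S I O) (s : S) (α : List (I × ℝ)) (sf : S) : Prop :=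
  ∃ trs, TRunTo M s 0 α trs sf

/-- The timed outputs of a run: the `j`-th transition produces its output at time
`t_j + d_j`. -/
def rawOutputs (α : List (I × ℝ)) (trs : List (TTrans S I O)) : List (O × ℝ) :=
  List.zipWith (fun p tr => (tr.out, p.2 + ((tr.delay : ℕ) : ℝ))) α trs

/-- `timed_out(s, α)`: all time-sorted reorderings of the timed outputs of the run of `α` at `s`. -/
def timedOut (M : TFSM S I O) (s : S) (α : List (I × ℝ)) : Set (List (O × ℝ)) :=
  { β | ∃ trs sf, TRunTo M s 0 α trs sf ∧ List.Perm β (rawOutputs α trs) ∧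
        List.Chain' (· ≤ ·) (β.map Prod.snd) }

/-- Homing sequence for a TFSM with output delays. -/
def THoming (M : TFSM S I O) (α : List (I × ℝ)) : Prop :=
  IsTimedInputSeq α ∧ ∀ s1 s2 : S, timedOut M s1 α = timedOut M s2 α →
    ∃ sf : S, TReaches M s1 α sf ∧ TReaches M s2 α sf

/-- Synchronizing sequence for a TFSM with output delays. -/
def TSync (M : TFSM S I O) (α : List (I × ℝ)) : Prop :=
  IsTimedInputSeq α ∧ ∃ sf : S, ∀ s : S, TReaches M s α sf

/-- A timed input sequence is non-integer if the difference of any two distinct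
timestamps is not an integer. -/
def NonInteger (α : List (I × ℝ)) : Prop :=
  ∀ j k : Fin α.length, j ≠ k → ∀ z : ℤ, (α.get j).2 - (α.get k).2 ≠ (z : ℝ)

/-- A transition of an (untimed) FSM. -/
structure FTrans (S A B : Type) where
  src : S
  inp : A
  out : B
  dst : S

/-- An (untimed) FSM given by its transition relation. -/
abbrev UntimedFSM (S A B : Type) := Set (FTrans S A B)

/-- FSM run: input sequence, produced output sequence, final state. -/
inductive FRunTo (T : UntimedFSM S A B) : S → List A → List B → S → Prop
  | nil (s : S) : FRunTo T s [] [] s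
  | cons {s sf : S} {a : A} {rest : List A} {γ : List B} {f : FTrans S A B} :
      f ∈ T → f.src = s → f.inp = a → FRunTo T f.dst rest γ sf →
      FRunTo T s (a :: rest) (f.out :: γ) sf

def FReaches (T : UntimedFSM S A B) (s : S) (β : List A) (sf : S) : Prop :=
  ∃ γ, FRunTo T s β γ sf

/-- `out(s, β)` for an FSM (a set, i.e. a partial value, since the FSM may be partial). -/
def FOut (T : UntimedFSM S A B) (s : S) (β : List A) : Set (List B) :=
  { γ | ∃ sf, FRunTo T s β γ sf }

def FDeterministic (T : UntimedFSM S A B) : Prop :=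
  ∀ f ∈ T, ∀ f' ∈ T, f.src = f'.src → f.inp = f'.inp → f = f'

/-- Completeness of an FSM relative to an input alphabet `A0`. -/
def FCompleteOn (T : UntimedFSM S A B) (A0 : Set A) : Prop :=
  ∀ s : S, ∀ a ∈ A0, ∃ f ∈ T, f.src = s ∧ f.inp = a

/-- Synchronizing sequence for an FSM. -/
def FSync (T : UntimedFSM S A B) (β : List A) : Prop :=
  ∃ sf : S, ∀ s : S, FReaches T s β sf

/-- Homing sequence for an FSM. -/
def FHoming (T : UntimedFSM S A B) (β : List A) : Prop :=
  ∀ s1 s2 : S, FOut T s1 β = FOut T s2 β →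
    ∃ sf : S, FReaches T s1 β sf ∧ FReaches T s2 β sf

/-- The guards appearing on transitions labeled with input `i`. -/
def guardsOf (M : TFSM S I O) (i : I) : Set Guard :=
  { g | ∃ tr ∈ M, tr.inp = i ∧ tr.guard = g }

/-- Boundary points of the guards labeled `i`. -/
def boundaries (M : TFSM S I O) (i : I) : Set ℕ :=
  { p | ∃ g ∈ guardsOf M i, g.lo = p ∨ g.hi = p }

/-- `Ḡ_i`: the half-open intervals determined by consecutive boundary points of `G_i`. -/
def refinedGuards (M : TFSM S I O) (i : I) : Set Guard :=
  { g | g.rightClosed = false ∧ g.lo ∈ boundaries M i ∧ g.hi ∈ boundaries M i ∧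
        g.lo < g.hi ∧ ∀ r ∈ boundaries M i, ¬ (g.lo < r ∧ r < g.hi) }

/-- The abstract input alphabet `I_G = {(i, g) : g ∈ Ḡ_i}`. -/
def absInputs (M : TFSM S I O) : Set (I × Guard) :=
  { p | p.2 ∈ refinedGuards M p.1 }

/-- The region FSM `R(S)` of a TFSM with output delays. -/
def regionFSM (M : TFSM S I O) : UntimedFSM S (I × Guard) (O × ℕ+) :=
  { f | f.inp ∈ absInputs M ∧ ∃ tr ∈ M, tr.src = f.src ∧ tr.inp = f.inp.1 ∧
        tr.out = f.out.1 ∧ tr.delay = f.out.2 ∧ tr.dst = f.dst ∧ GuardSub f.inp.2 tr.guard }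

/-- All guards are half-open intervals `[u, v)` with `u < v`. -/
def HalfOpenGuards (M : TFSM S I O) : Prop :=
  ∀ tr ∈ M, tr.guard.rightClosed = false ∧ tr.guard.lo < tr.guard.hi

/-- Weak completeness: all states have the same domain. -/
def WeaklyComplete (M : TFSM S I O) : Prop :=
  ∀ s s' : S, TDom M s = TDom M s'

/-- `Projects M t0 α β`: `β` is the untimed projection `[α]_{I_G}` of `α`
(relative to previous timestamp `t0`). -/
inductive Projects (M : TFSM S I O) : ℝ → List (I × ℝ) → List (I × Guard) → Prop
  | nil (t0 : ℝ) : Projects M t0 [] []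
  | cons {t0 t : ℝ} {i : I} {g : Guard} {rest : List (I × ℝ)} {brest : List (I × Guard)} :
      g ∈ refinedGuards M i → GuardMem g (t - t0) →
      Projects M t rest brest →
      Projects M t0 ((i, t) :: rest) ((i, g) :: brest)

/-- All guards are point intervals `[u, u]` with `u` a positive integer. -/
def PointIntervals (M : TFSM S I O) : Prop :=
  ∀ tr ∈ M, tr.guard.rightClosed = true ∧ tr.guard.lo = tr.guard.hi ∧ 0 < tr.guard.lo

/-- The region FSM of a TFSM with only point intervals: abstract inputs are the
(input, guard) pairs appearing on transitions. -/
def pointRegionFSM (M : TFSM S I O) : UntimedFSM S (I × Guard) (O × ℕ+) :=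
  { f | ∃ tr ∈ M, tr.src = f.src ∧ (tr.inp, tr.guard) = f.inp ∧
        (tr.out, tr.delay) = f.out ∧ tr.dst = f.dst }

/-- `t(α)`: the last timestamp of `α` (0 for the empty sequence). -/
def tEnd (α : List (I × ℝ)) : ℝ := (α.map Prod.snd).getLastD 0

/-- The number of timed outputs of the run produced at or after time `t(α)`
(counted with multiplicity). -/
noncomputable def tailCount (α : List (I × ℝ)) (trs : List (TTrans S I O)) : ℕ :=
  ((rawOutputs α trs).filter (fun p => decide (tEnd α ≤ p.2))).length

/-- The timed output tail of a run: the multiset of `(o, τ - t(α))` over timed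
outputs `(o, τ)` of the run with `τ ≥ t(α)`. -/
noncomputable def tailOf (α : List (I × ℝ)) (trs : List (TTrans S I O)) : Multiset (O × ℝ) :=
  ↑(((rawOutputs α trs).filter (fun p => decide (tEnd α ≤ p.2))).map
      (fun p => (p.1, p.2 - tEnd α)))

/-- The set of all timed output tails of the TFSM, together with the empty tail. -/
def Tout (M : TFSM S I O) : Set (Multiset (O × ℝ)) :=
  insert 0 { m | ∃ (s : S) (α : List (I × ℝ)) (trs : List (TTrans S I O)) (sf : S),
    α ∈ TDom M s ∧ TRunTo M s 0 α trs sf ∧ m = tailOf α trs }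

/-- The output delay at state `j` of the machine `B_n`. -/
def BnDelay (n : ℕ) (j : Fin n) : ℕ+ :=
  if (j : ℕ) = n - 2 then 3 else if (j : ℕ) = n - 1 then 1 else 2

/-- The transition of `B_n` out of state `j`. -/
def BnTrans (n : ℕ) [NeZero n] (j : Fin n) : TTrans (Fin n) Unit Unit :=
  ⟨j, (), ⟨1, 1, true⟩, (), BnDelay n j, j + 1⟩

/-- The TFSM `B_n` with only point intervals. -/
def Bn (n : ℕ) [NeZero n] : TFSM (Fin n) Unit Unit := Set.range (BnTrans n)

lemma guardMem_lo {g : Guard} (h : g.lo < g.hi) : GuardMem g g.lo := by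
  refine ⟨le_rfl, ?_⟩
  have h' : (g.lo : ℝ) < g.hi := by exact_mod_cast h
  split_ifs
  · exact h'.le
  · exact h'

/-- A half-open guard of `G_i` that contains the left endpoint of a refined guard contains the
whole refined guard. -/
lemma guardSub_of_lo_mem {S I O : Type} {M : TFSM S I O} {i : I} {g g' : Guard}
    (hg : g ∈ refinedGuards M i) (hg' : g' ∈ guardsOf M i) (hopen : g'.rightClosed = false)
    (hmem : GuardMem g' g.lo) : GuardSub g g' := by
  obtain ⟨hr, -, -, -, hcons⟩ := hg
  simp only [GuardMem, hopen, Bool.false_eq_true, if_false] at hmem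
  have hlt : g.lo < g'.hi := by exact_mod_cast hmem.2
  have hle : g.hi ≤ g'.hi := by
    by_contra! h
    exact hcons g'.hi ⟨g', hg', Or.inr rfl⟩ ⟨hlt, h⟩
  have hle' : (g.hi : ℝ) ≤ g'.hi := by exact_mod_cast hle
  intro t ht
  simp only [GuardMem, hr, hopen, Bool.false_eq_true, if_false] at ht ⊢
  exact ⟨hmem.1.trans ht.1, ht.2.trans_le hle'⟩

/-- Every boundary point of `G_i` lies between the left endpoint of some guard and the right
endpoint of some guard of `G_i`. -/
lemma exists_guard_of_boundary {S I O : Type} {M : TFSM S I O} (hho : HalfOpenGuards M)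
    {i : I} {p : ℕ} (hp : p ∈ boundaries M i) :
    ∃ g ∈ guardsOf M i, g.lo ≤ p ∧ p ≤ g.hi := by
  obtain ⟨g, ⟨tr, htr, hi, rfl⟩, h⟩ := hp
  have := (hho tr htr).2
  exact ⟨tr.guard, ⟨tr, htr, hi, rfl⟩, by omega, by omega⟩

/-- for a weakly-complete deterministic TFSM with half-open guards, where
for every input `i` and state `s` the union of the guards labeled `i` at `s` equals
`[U_i, V_i)` (expressed pointwise: `t ∈ [U_i, V_i)` iff some guard of `G_i` has
`lo ≤ t` and some guard of `G_i` has `t < hi`), the region FSM is deterministic and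
complete (on its abstract input alphabet `I_G`). -/
theorem stmt5 {S I O : Type} [Fintype S] [Nonempty S] [Fintype I] [Nonempty I]
    [Fintype O] [Nonempty O]
    (M : TFSM S I O) (hfin : Set.Finite M) (hdet : TFSMDeterministic M)
    (hwc : WeaklyComplete M) (hho : HalfOpenGuards M)
    (hcover : ∀ (s : S) (i : I) (t : ℝ),
      ((∃ g ∈ guardsOf M i, (g.lo : ℝ) ≤ t) ∧ (∃ g ∈ guardsOf M i, t < (g.hi : ℝ))) ↔
        ∃ tr ∈ M, tr.src = s ∧ tr.inp = i ∧ GuardMem tr.guard t) :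
    FDeterministic (regionFSM M) ∧ FCompleteOn (regionFSM M) (absInputs M) := by
  constructor
  · rintro ⟨s, ⟨i, g⟩, ⟨o, d⟩, s'⟩ ⟨hin, tr, htr, h1, h2, h3, h4, h5, hsub⟩
      ⟨s₂, ⟨i₂, g₂⟩, ⟨o₂, d₂⟩, s₂'⟩ ⟨-, tr', htr', k1, k2, k3, k4, k5, hsub'⟩ hs hi
    obtain ⟨-, -, -, hlt, -⟩ := hin
    simp only [Prod.mk.injEq] at *
    obtain ⟨rfl, rfl⟩ := hi
    subst hs
    have hlo := guardMem_lo hlt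
    have heq : tr = tr' := by
      by_contra hne
      exact hdet tr htr tr' htr' (h1.trans k1.symm) (h2.trans k2.symm) hne _
        ⟨hsub _ hlo, hsub' _ hlo⟩
    subst heq
    simp [← h3, ← h4, ← h5, ← k3, ← k4, ← k5]
  · rintro s ⟨i, g⟩ hg
    obtain ⟨-, hlo, hhi, hlt, -⟩ := id hg
    dsimp only at hlo hhi hlt
    obtain ⟨a, ha, hal, -⟩ := exists_guard_of_boundary hho hlo
    obtain ⟨b, hb, -, hbh⟩ := exists_guard_of_boundary hho hhi
    obtain ⟨tr, htr, hsrc, hinp, hmem⟩ := (hcover s i g.lo).1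
      ⟨⟨a, ha, by exact_mod_cast hal⟩, ⟨b, hb, by exact_mod_cast hlt.trans_le hbh⟩⟩
    exact ⟨⟨s, (i, g), (tr.out, tr.delay), tr.dst⟩, ⟨hg, tr, htr, hsrc, hinp, rfl, rfl, rfl,
      guardSub_of_lo_mem hg ⟨tr, htr, hinp, rfl⟩ (hho tr htr).1 hmem⟩, rfl, rfl⟩
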